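/- For N ≥ 3, the poset (ONC_N, ≤_3) is an induced subposet of the noncrossing partition lattice (NC_N, ≤_2): for x, y ∈ ONC_N, x ≤_3 y holds if and only if x ≤_2 y. -/

import Mathlib

open Equiv Equiv.Perm

/-- The word length of `x` with respect to a generating set `T`. -/
noncomputable def lenT {G : Type*} [Group G] (T : Set G) (x : G) : ℕ :=
  sInf {n | ∃ l : List G, (∀ t ∈ l, t ∈ T) ∧ l.prod = x ∧ l.length = n}

/-- The `T`-prefix order. -/
def leT {G : Type*} [Group G] (T : Set G) (x y : G) : Prop :=
  lenT T y = lenT T x + lenT T (x⁻¹ * y)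

/-- The set of 3-cycles of the symmetric group on `Fin N`. -/
def threeCycles (N : ℕ) : Set (Perm (Fin N)) := {σ | σ.IsThreeCycle}

/-- The set of transpositions of the symmetric group on `Fin N`. -/
def transpositions (N : ℕ) : Set (Perm (Fin N)) := {σ | σ.IsSwap}

/-- The number of odd cycles of a permutation, counting fixed points. -/
def ocyc {N : ℕ} (x : Perm (Fin N)) : ℕ :=
  (x.cycleType.filter (fun n => Odd n)).card + (N - x.cycleType.sum)

open scoped Classical in
/-- The support of the cycle of `x` containing `a` (a singleton for a fixed point). -/
noncomputable def orbitF {N : ℕ} (x : Perm (Fin N)) (a : Fin N) : Finset (Fin N) :=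
  Finset.univ.filter (fun b => x.SameCycle a b)

/-- Property (OD) for a cycle written as an increasing sequence `u₁ < u₂ < ⋯ < u_q`:
`q` is odd and all consecutive differences `u_{j+1} - u_j` are odd. -/
def ODfinset {N : ℕ} (S : Finset (Fin N)) : Prop :=
  Odd S.card ∧ (S.sort (· ≤ ·)).Chain' (fun a b => Odd ((b : ℕ) - (a : ℕ)))

/-- All cycles of `x`, written as increasing sequences, satisfy property (OD). -/
def satisfiesOD {N : ℕ} (x : Perm (Fin N)) : Prop := ∀ a : Fin N, ODfinset (orbitF x a)

/-- Membership in `ONC_N`: a noncrossing partition all of whose cycles satisfy (OD). -/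
def memONC {N : ℕ} (x : Perm (Fin N)) : Prop :=
  leT (transpositions N) x (finRotate N) ∧ satisfiesOD x

/-
The map `σ ↦ rank (σ - 1)` is subadditive, is at most `1` on transpositions and at most `2` on
3-cycles. It equals the transposition length of every `σ`, and twice the 3-cycle length of `σ` when
all cycles of `σ` are odd. Hence the theorem amounts to showing that all cycles of `x⁻¹ * y` are odd
when `x ≤₂ y` in `ONC_N`.

A noncrossing partition sends each `i` to the next element of its cycle in the cyclic order, and
this property passes from `y` to `x⁻¹ * y`. Under it, (OD) says that parity changes at each ascent
`i < x i` and is preserved at the single remaining `i` of the cycle. This parity rule also passes to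
`x⁻¹ * y`, and it forces a cycle with one non-ascent to have an even number of ascents.
-/

section WordLength

variable {G : Type*} [Group G] {T : Set G} {x : G}

theorem lenT_prod_le_length {l : List G} (hl : ∀ t ∈ l, t ∈ T) : lenT T l.prod ≤ l.length :=
  Nat.sInf_le ⟨l, hl, rfl, rfl⟩

theorem exists_list_length_eq_lenT (hx : x ∈ Submonoid.closure T) :
    ∃ l : List G, (∀ t ∈ l, t ∈ T) ∧ l.prod = x ∧ l.length = lenT T x := by
  obtain ⟨l, hl, hprod⟩ := Submonoid.exists_list_of_mem_closure hx
  exact Nat.sInf_mem (s := {n | ∃ l : List G, (∀ t ∈ l, t ∈ T) ∧ l.prod = x ∧ l.length = n})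
    ⟨l.length, l, hl, hprod, rfl⟩

theorem le_mul_lenT_of_subadditive {f : G → ℕ} {c : ℕ} (hone : f 1 = 0)
    (hmul : ∀ g h, f (g * h) ≤ f g + f h) (hT : ∀ t ∈ T, f t ≤ c)
    (hx : x ∈ Submonoid.closure T) : f x ≤ c * lenT T x := by
  obtain ⟨l, hl, rfl, hlen⟩ := exists_list_length_eq_lenT hx
  rw [← hlen]
  clear hlen hx
  induction l with
  | nil => simp [hone]
  | cons t l ih =>
    calc f (t :: l).prod ≤ f t + f l.prod := hmul t l.prod
      _ ≤ c + c * l.length :=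
        add_le_add (hT t (hl t List.mem_cons_self))
          (ih fun s hs => hl s (List.mem_cons_of_mem t hs))
      _ = c * (t :: l).length := by rw [List.length_cons]; ring

theorem mul_lenT_prod_eq_of_subadditive {f : G → ℕ} {c : ℕ} (hone : f 1 = 0)
    (hmul : ∀ g h, f (g * h) ≤ f g + f h) (hT : ∀ t ∈ T, f t ≤ c) {l : List G}
    (hl : ∀ t ∈ l, t ∈ T) (hlen : c * l.length ≤ f l.prod) : c * lenT T l.prod = f l.prod :=
  le_antisymm ((Nat.mul_le_mul_left c (lenT_prod_le_length hl)).trans hlen)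
    (le_mul_lenT_of_subadditive hone hmul hT
      (Submonoid.list_prod_mem _ fun t ht => Submonoid.subset_closure (hl t ht)))

end WordLength

section AbsoluteLength

variable {α : Type*} [DecidableEq α]

/-- The moved space of `σ`: the image of `σ - 1` acting on `α → ℚ` by permuting the standard
basis vectors. -/
def movedSpace (σ : Perm α) : Submodule ℚ (α → ℚ) :=
  Submodule.span ℚ (Set.range fun i => Pi.single (σ i) 1 - Pi.single i 1)

theorem single_sub_single_mem_movedSpace (σ : Perm α) (i : α) :
    (Pi.single (σ i) 1 - Pi.single i 1 : α → ℚ) ∈ movedSpace σ :=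
  Submodule.subset_span ⟨i, rfl⟩

theorem movedSpace_le_iff {σ : Perm α} {V : Submodule ℚ (α → ℚ)} :
    movedSpace σ ≤ V ↔ ∀ i, (Pi.single (σ i) 1 - Pi.single i 1 : α → ℚ) ∈ V := by
  rw [movedSpace, Submodule.span_le, Set.range_subset_iff]
  rfl

theorem movedSpace_one : movedSpace (1 : Perm α) = ⊥ :=
  le_bot_iff.mp (movedSpace_le_iff.mpr fun i => by simp)

theorem movedSpace_mul_le (σ τ : Perm α) : movedSpace (σ * τ) ≤ movedSpace σ ⊔ movedSpace τ :=
  movedSpace_le_iff.mpr fun i => by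
    rw [mul_apply, ← sub_add_sub_cancel _ (Pi.single (τ i) 1)]
    exact Submodule.add_mem_sup (single_sub_single_mem_movedSpace σ (τ i))
      (single_sub_single_mem_movedSpace τ i)

theorem movedSpace_swap_le (a b : α) :
    movedSpace (swap a b) ≤ Submodule.span ℚ {Pi.single b 1 - Pi.single a 1} := by
  refine movedSpace_le_iff.mpr fun i => ?_
  have hmem := Submodule.mem_span_singleton_self (R := ℚ)
    (Pi.single b 1 - Pi.single a 1 : α → ℚ)
  rcases eq_or_ne i a with rfl | hia
  · rwa [swap_apply_left]
  rcases eq_or_ne i b with rfl | hib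
  · rwa [swap_apply_right, ← neg_mem_iff, neg_sub]
  · rw [swap_apply_of_ne_of_ne hia hib, sub_self]
    exact zero_mem _

theorem movedSpace_conj_le (σ τ : Perm α) :
    movedSpace (τ⁻¹ * σ * τ) ≤ (movedSpace σ).map (LinearMap.funLeft ℚ ℚ τ) := by
  refine movedSpace_le_iff.mpr fun i => ⟨_, single_sub_single_mem_movedSpace σ (τ i), ?_⟩
  ext j
  simp [LinearMap.funLeft_apply, Pi.single_apply, eq_symm_apply]

/-- The absolute length of `σ`, i.e. its length with respect to transpositions, defined as the
rank of `σ - 1`. -/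
noncomputable def absLength (σ : Perm α) : ℕ := Module.finrank ℚ (movedSpace σ)

theorem absLength_one : absLength (1 : Perm α) = 0 := by
  rw [absLength, movedSpace_one, finrank_bot]

theorem absLength_swap_le (a b : α) : absLength (swap a b) ≤ 1 :=
  (Submodule.finrank_mono (movedSpace_swap_le a b)).trans
    ((finrank_span_le_card _).trans (by simp))

variable [Finite α]

theorem absLength_mul_le (σ τ : Perm α) : absLength (σ * τ) ≤ absLength σ + absLength τ :=
  (Submodule.finrank_mono (movedSpace_mul_le σ τ)).trans
    (Submodule.finrank_add_le_finrank_add_finrank _ _)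

theorem absLength_conj_le (σ τ : Perm α) : absLength (τ⁻¹ * σ * τ) ≤ absLength σ :=
  (Submodule.finrank_mono (movedSpace_conj_le σ τ)).trans (Submodule.finrank_map_le _ _)

-- A function that is constant on the cycles of `σ` is orthogonal to the moved space of `σ`.
theorem sameCycle_of_movedSpace_le {σ τ : Perm α} (h : movedSpace τ ≤ movedSpace σ) (i : α) :
    σ.SameCycle i (τ i) := by
  classical
  cases nonempty_fintype α
  let f : α → ℚ := fun j => if σ.SameCycle i j then 1 else 0
  have hker : movedSpace σ ≤ LinearMap.ker (dotProductBilin ℚ ℚ f) :=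
    movedSpace_le_iff.mpr fun j => by simp [f]
  have hi := hker (h (single_sub_single_mem_movedSpace τ i))
  by_contra hne
  simp [f, hne, SameCycle.refl] at hi

theorem sameCycle_mul_apply_right {σ τ : Perm α}
    (h : absLength (σ * τ) = absLength σ + absLength τ) (i : α) :
    (σ * τ).SameCycle i (τ i) := by
  have hsup : movedSpace (σ * τ) = movedSpace σ ⊔ movedSpace τ :=
    Submodule.eq_of_le_of_finrank_le (movedSpace_mul_le σ τ)
      ((Submodule.finrank_add_le_finrank_add_finrank _ _).trans h.ge)
  exact sameCycle_of_movedSpace_le (hsup ▸ le_sup_right) i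

theorem absLength_eq_add_of_mul_mul {σ τ ρ : Perm α}
    (h : absLength (σ * τ * ρ) = absLength σ + absLength τ + absLength ρ) :
    absLength (σ * τ) = absLength σ + absLength τ := by
  have := absLength_mul_le (σ * τ) ρ
  have := absLength_mul_le σ τ
  omega

end AbsoluteLength

section Bypass

variable {α : Type*} [DecidableEq α]

/-- The permutation obtained from `σ` by removing `a` from its cycle. -/
def bypass (σ : Perm α) (a : α) : Perm α := swap a (σ a) * σ

theorem swap_mul_bypass (σ : Perm α) (a : α) : swap a (σ a) * bypass σ a = σ :=
  swap_mul_self_mul _ _ _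

theorem bypass_apply (σ : Perm α) (a i : α) :
    bypass σ a i = if i = a then a else if σ i = a then σ a else σ i := by
  simp only [bypass, mul_apply, swap_apply_def, EmbeddingLike.apply_eq_iff_eq]
  grind

theorem movedSpace_bypass_le (σ : Perm α) (a : α) : movedSpace (bypass σ a) ≤ movedSpace σ := by
  refine (movedSpace_mul_le _ _).trans (sup_le ((movedSpace_swap_le a (σ a)).trans ?_) le_rfl)
  rw [Submodule.span_singleton_le_iff_mem]
  exact single_sub_single_mem_movedSpace σ a

variable [Finite α]

theorem absLength_bypass_add_one {σ : Perm α} {a : α} (ha : σ a ≠ a) :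
    absLength (bypass σ a) + 1 = absLength σ := by
  have hnot : ¬ movedSpace σ ≤ movedSpace (bypass σ a) := fun hle =>
    ha ((sameCycle_of_movedSpace_le hle a).eq_of_left (by simp [Function.IsFixedPt, bypass])).symm
  have hlt : absLength (bypass σ a) < absLength σ :=
    Submodule.finrank_lt_finrank_of_lt (lt_of_le_not_ge (movedSpace_bypass_le σ a) hnot)
  have hle : absLength σ ≤ absLength (swap a (σ a)) + absLength (bypass σ a) := by
    simpa only [swap_mul_bypass] using absLength_mul_le (swap a (σ a)) (bypass σ a)
  have := absLength_swap_le a (σ a)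
  omega

theorem absLength_swap {a b : α} (hab : a ≠ b) : absLength (swap a b) = 1 := by
  have h := absLength_bypass_add_one (σ := swap a b) (a := a) (by simpa using hab.symm)
  have := absLength_swap_le a b
  omega

theorem bypass_induction {p : Perm α → Prop} (one : p 1)
    (step : ∀ σ a, σ a ≠ a → p (bypass σ a) → p σ) (σ : Perm α) : p σ := by
  induction hn : absLength σ using Nat.strong_induction_on generalizing σ with
  | _ n ih =>
    rcases eq_or_ne σ 1 with rfl | hne
    · exact one
    · obtain ⟨a, ha⟩ := DFunLike.ne_iff.mp hne
      have := absLength_bypass_add_one ha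
      exact step σ a ha (ih _ (by omega) _ rfl)

theorem exists_list_isSwap (σ : Perm α) :
    ∃ l : List (Perm α), (∀ t ∈ l, t.IsSwap) ∧ l.prod = σ ∧ l.length = absLength σ := by
  induction σ using bypass_induction with
  | one => exact ⟨[], by simp, rfl, absLength_one.symm⟩
  | step σ a ha ih =>
    obtain ⟨l, hl, hprod, hlen⟩ := ih
    have hswap : (swap a (σ a)).IsSwap := ⟨a, σ a, ha.symm, rfl⟩
    refine ⟨swap a (σ a) :: l, List.forall_mem_cons.mpr ⟨hswap, hl⟩, ?_, ?_⟩
    · rw [List.prod_cons, hprod, swap_mul_bypass]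
    · rw [List.length_cons, hlen, absLength_bypass_add_one ha]

theorem lenT_isSwap (σ : Perm α) : lenT {τ : Perm α | τ.IsSwap} σ = absLength σ := by
  obtain ⟨l, hl, rfl, hlen⟩ := exists_list_isSwap σ
  have hswap : ∀ t ∈ {τ : Perm α | τ.IsSwap}, absLength t ≤ 1 := by
    rintro _ ⟨a, b, -, rfl⟩
    exact absLength_swap_le a b
  simpa only [one_mul] using
    mul_lenT_prod_eq_of_subadditive absLength_one absLength_mul_le hswap hl (by omega)

theorem leT_isSwap_iff {σ τ : Perm α} :
    leT {ρ : Perm α | ρ.IsSwap} σ τ ↔ absLength τ = absLength σ + absLength (σ⁻¹ * τ) := by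
  simp only [leT, lenT_isSwap]

end Bypass

section OddCycles

variable {α : Type*}

/-- All cycles of `σ` have odd length. This is encoded as the absence of the eigenvalue `-1`: a
nonzero function that changes sign at each application of `σ` exists exactly on a cycle of even
length. -/
def HasOddCycles (σ : Perm α) : Prop := ∀ f : α → ℚ, (∀ i, f (σ i) = -f i) → f = 0

theorem HasOddCycles.apply_apply_ne {σ : Perm α} (hσ : HasOddCycles σ) {a : α} (ha : σ a ≠ a) :
    σ (σ a) ≠ a := by
  classical
  intro hcycle
  have hzero := hσ (fun i => if i = a then 1 else if i = σ a then -1 else 0) fun i => by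
    have := σ.injective.eq_iff (a := i) (b := a)
    have := σ.injective.eq_iff (a := i) (b := σ a)
    grind
  simpa using congrFun hzero a

variable [DecidableEq α]

-- A function alternating along `bypass (bypass σ a) (σ a)` becomes one alternating along `σ` when
-- `a` and `σ a` are given the values continuing the alternation backwards from `σ (σ a)`.
theorem HasOddCycles.bypass_bypass {σ : Perm α} (hσ : HasOddCycles σ) {a : α} (ha : σ a ≠ a) :
    HasOddCycles (bypass (bypass σ a) (σ a)) := by
  intro g hg
  have hac := hσ.apply_apply_ne ha
  simp only [bypass_apply] at hg
  let f : α → ℚ := fun i => if i = a then g (σ (σ a)) else if i = σ a then -g (σ (σ a)) else g i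
  have hf : f = 0 := hσ f fun i => by
    have := hg i
    have := σ.injective.eq_iff (a := i) (b := a)
    have := σ.injective.eq_iff (a := i) (b := σ a)
    grind
  have hga : g a = 0 := by have := hg a; grind
  have hgb : g (σ a) = 0 := by have := hg (σ a); grind
  funext i
  have : f i = 0 := congrFun hf i
  change g i = 0
  grind

variable [Fintype α]

theorem absLength_le_two_of_isThreeCycle {σ : Perm α} (hσ : σ.IsThreeCycle) :
    absLength σ ≤ 2 := by
  obtain ⟨a, ha⟩ := Finset.nonempty_iff_ne_empty.mpr (support_eq_empty_iff.not.mpr hσ.ne_one)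
  rw [hσ.eq_swap_mul_swap_iff_mem_support.mpr ha]
  exact (absLength_mul_le _ _).trans
    (add_le_add (absLength_swap_le _ _) (absLength_swap_le _ _))

theorem HasOddCycles.isThreeCycle_swap_mul_swap {σ : Perm α} (hσ : HasOddCycles σ) {a : α}
    (ha : σ a ≠ a) : (swap a (σ a) * swap (σ a) (σ (σ a))).IsThreeCycle := by
  rw [swap_comm a]
  exact isThreeCycle_swap_mul_swap_same ha (σ.injective.ne ha).symm (hσ.apply_apply_ne ha).symm

theorem HasOddCycles.exists_list_isThreeCycle {σ : Perm α} (hσ : HasOddCycles σ) :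
    ∃ l : List (Perm α), (∀ t ∈ l, t.IsThreeCycle) ∧ l.prod = σ ∧
      2 * l.length = absLength σ := by
  induction hn : absLength σ using Nat.strong_induction_on generalizing σ with
  | _ n ih =>
    subst hn
    rcases eq_or_ne σ 1 with rfl | hne
    · exact ⟨[], by simp, rfl, absLength_one.symm⟩
    obtain ⟨a, ha⟩ : ∃ a, σ a ≠ a := DFunLike.ne_iff.mp hne
    have hbypass : bypass σ a (σ a) = σ (σ a) := by
      rw [bypass_apply, if_neg ha, if_neg (hσ.apply_apply_ne ha)]
    have hlen₁ := absLength_bypass_add_one ha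
    have hlen₂ := absLength_bypass_add_one (σ := bypass σ a) (a := σ a)
      (hbypass.trans_ne (σ.injective.ne ha))
    obtain ⟨l, hl, hprod, hlen⟩ := ih _ (by omega) (hσ.bypass_bypass ha) rfl
    refine ⟨swap a (σ a) * swap (σ a) (σ (σ a)) :: l,
      List.forall_mem_cons.mpr ⟨hσ.isThreeCycle_swap_mul_swap ha, hl⟩, ?_, ?_⟩
    · rw [List.prod_cons, hprod, mul_assoc, ← hbypass, swap_mul_bypass, swap_mul_bypass]
    · rw [List.length_cons]
      omega

theorem HasOddCycles.two_mul_lenT_isThreeCycle {σ : Perm α} (hσ : HasOddCycles σ) :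
    2 * lenT {τ : Perm α | τ.IsThreeCycle} σ = absLength σ := by
  obtain ⟨l, hl, rfl, hlen⟩ := hσ.exists_list_isThreeCycle
  exact mul_lenT_prod_eq_of_subadditive absLength_one absLength_mul_le
    (fun _ => absLength_le_two_of_isThreeCycle) hl hlen.le

theorem HasOddCycles.mem_closure_isThreeCycle {σ : Perm α} (hσ : HasOddCycles σ) :
    σ ∈ Subgroup.closure {τ : Perm α | τ.IsThreeCycle} := by
  obtain ⟨l, hl, rfl, -⟩ := hσ.exists_list_isThreeCycle
  exact Subgroup.list_prod_mem _ fun t ht => Subgroup.subset_closure (hl t ht)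

theorem HasOddCycles.leT_isSwap_of_leT_isThreeCycle {σ τ : Perm α} (hσ : HasOddCycles σ)
    (hτ : HasOddCycles τ) (h : leT {ρ : Perm α | ρ.IsThreeCycle} σ τ) :
    leT {ρ : Perm α | ρ.IsSwap} σ τ := by
  have hmem : σ⁻¹ * τ ∈ Submonoid.closure {ρ : Perm α | ρ.IsThreeCycle} := by
    rw [← Subgroup.closure_toSubmonoid_of_finite]
    exact Subgroup.mul_mem _ (Subgroup.inv_mem _ hσ.mem_closure_isThreeCycle)
      hτ.mem_closure_isThreeCycle
  have hle : absLength (σ⁻¹ * τ) ≤ 2 * lenT {ρ : Perm α | ρ.IsThreeCycle} (σ⁻¹ * τ) :=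
    le_mul_lenT_of_subadditive absLength_one absLength_mul_le
      (fun _ => absLength_le_two_of_isThreeCycle) hmem
  have hge : absLength τ ≤ absLength σ + absLength (σ⁻¹ * τ) := by
    simpa only [mul_inv_cancel_left] using absLength_mul_le σ (σ⁻¹ * τ)
  rw [leT_isSwap_iff]
  rw [leT] at h
  have := hσ.two_mul_lenT_isThreeCycle
  have := hτ.two_mul_lenT_isThreeCycle
  omega

theorem HasOddCycles.leT_isThreeCycle_of_leT_isSwap {σ τ : Perm α} (hσ : HasOddCycles σ)
    (hτ : HasOddCycles τ) (hστ : HasOddCycles (σ⁻¹ * τ)) (h : leT {ρ : Perm α | ρ.IsSwap} σ τ) :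
    leT {ρ : Perm α | ρ.IsThreeCycle} σ τ := by
  rw [leT_isSwap_iff] at h
  rw [leT]
  have := hσ.two_mul_lenT_isThreeCycle
  have := hτ.two_mul_lenT_isThreeCycle
  have := hστ.two_mul_lenT_isThreeCycle
  omega

end OddCycles

theorem prop_of_sameCycle {α : Type*} [Finite α] {σ : Perm α} {p : α → Prop}
    (hp : ∀ i, p i → p (σ i)) {i j : α} (hij : σ.SameCycle i j) (hi : p i) : p j := by
  obtain ⟨n, -, rfl⟩ := hij.exists_pow_eq'
  clear hij
  induction n with
  | zero => exact hi
  | succ n ih => rw [pow_succ', mul_apply]; exact hp _ ih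

section CyclicSuccessor

variable {α : Type*} [LinearOrder α]

/-- The half-open interval `(a, b]` in the cyclic order obtained from the linear order by joining
its two ends; `(a, a]` is the whole circle. -/
def cyclicIoc (a b : α) : Set α := {c | a < c ∧ c ≤ b ∨ b ≤ a ∧ a < c ∨ c ≤ b ∧ b ≤ a}

theorem mem_cyclicIoc {a b c : α} :
    c ∈ cyclicIoc a b ↔ a < c ∧ c ≤ b ∨ b ≤ a ∧ a < c ∨ c ≤ b ∧ b ≤ a :=
  Iff.rfl

theorem right_mem_cyclicIoc (a b : α) : b ∈ cyclicIoc a b := by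
  grind [mem_cyclicIoc]

theorem left_notMem_cyclicIoc {a b : α} (hab : a ≠ b) : a ∉ cyclicIoc a b := by
  grind [mem_cyclicIoc]

theorem cyclicIoc_subset_cyclicIoc_left {a b c : α} (hc : c ∈ cyclicIoc a b) (hcb : c ≠ b) :
    cyclicIoc c b ⊆ cyclicIoc a b := by
  intro d hd
  grind [mem_cyclicIoc]

theorem cyclicIoc_subset_cyclicIoc_of_mem {a b c : α} (hc : c ∈ cyclicIoc b a) :
    cyclicIoc b c ⊆ cyclicIoc a c := by
  intro d hd
  grind [mem_cyclicIoc]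

/-- Each `i` is sent by `σ` to the next element of its cycle in the cyclic order. -/
def MapsToCyclicSucc (σ : Perm α) : Prop := ∀ i j, σ.SameCycle i j → σ i ∈ cyclicIoc i j

variable {σ : Perm α} {a b : α}

theorem MapsToCyclicSucc.apply_eq_of_apply_le (hσ : MapsToCyclicSucc σ) {i m : α}
    (hm : ∀ j, σ.SameCycle m j → m ≤ j) (hmi : σ.SameCycle m i) (hi : σ i ≤ i) : σ i = m := by
  have := hσ i m hmi.symm
  have := hm _ (sameCycle_apply_right.mpr hmi)
  have := hm i hmi
  grind [mem_cyclicIoc]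

variable [Finite α]

theorem sameCycle_of_mul_swap (hab : σ.SameCycle a b) {i j : α}
    (h : (σ * swap a b).SameCycle i j) : σ.SameCycle i j := by
  refine prop_of_sameCycle (fun k hk => ?_) h (SameCycle.refl σ i)
  rw [mul_apply, sameCycle_apply_right]
  rcases eq_or_ne k a with rfl | hka
  · rw [swap_apply_left]; exact hk.trans hab
  rcases eq_or_ne k b with rfl | hkb
  · rw [swap_apply_right]; exact hk.trans hab.symm
  · rwa [swap_apply_of_ne_of_ne hka hkb]

theorem MapsToCyclicSucc.mem_cyclicIoc_of_sameCycle_mul_swap (hσ : MapsToCyclicSucc σ)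
    (hab : a ≠ b) (hcycle : σ.SameCycle a b) {j : α} (hj : (σ * swap a b).SameCycle b j) :
    j ∈ cyclicIoc a b := by
  refine (prop_of_sameCycle (p := fun k => σ.SameCycle a k ∧ k ∈ cyclicIoc a b) ?_ hj
    ⟨hcycle, right_mem_cyclicIoc a b⟩).2
  rintro k ⟨hak, hk⟩
  rw [mul_apply, sameCycle_apply_right]
  rcases eq_or_ne k b with rfl | hkb
  · rw [swap_apply_right]
    exact ⟨.refl σ a, hσ a k hcycle⟩
  · have hka : k ≠ a := fun h => left_notMem_cyclicIoc hab (h ▸ hk)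
    rw [swap_apply_of_ne_of_ne hka hkb]
    exact ⟨hak, cyclicIoc_subset_cyclicIoc_left hk hkb (hσ k b (hak.symm.trans hcycle))⟩

theorem MapsToCyclicSucc.mul_swap_apply_left_mem (hσ : MapsToCyclicSucc σ) (hab : a ≠ b)
    (hcycle : σ.SameCycle a b) {j : α} (hj : (σ * swap a b).SameCycle a j) :
    (σ * swap a b) a ∈ cyclicIoc a j := by
  have hbj : σ.SameCycle b j := hcycle.symm.trans (sameCycle_of_mul_swap hcycle hj)
  rw [mul_apply, swap_apply_left]
  refine cyclicIoc_subset_cyclicIoc_of_mem ?_ (hσ b j hbj)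
  exact hσ.mem_cyclicIoc_of_sameCycle_mul_swap hab.symm hcycle.symm (swap_comm a b ▸ hj)

-- Multiplying by a transposition of two elements of one cycle cuts that cycle into two arcs.
theorem MapsToCyclicSucc.mul_swap (hσ : MapsToCyclicSucc σ) (hab : a ≠ b)
    (hcycle : σ.SameCycle a b) : MapsToCyclicSucc (σ * swap a b) := by
  intro i j hij
  rcases eq_or_ne i a with rfl | hia
  · exact hσ.mul_swap_apply_left_mem hab hcycle hij
  rcases eq_or_ne i b with rfl | hib
  · rw [swap_comm] at hij ⊢
    exact hσ.mul_swap_apply_left_mem hab.symm hcycle.symm hij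
  · rw [mul_apply, swap_apply_of_ne_of_ne hia hib]
    exact hσ i j (sameCycle_of_mul_swap hcycle hij)

theorem MapsToCyclicSucc.of_mul_left {τ : Perm α} (h : MapsToCyclicSucc (σ * τ))
    (hlen : absLength (σ * τ) = absLength σ + absLength τ) : MapsToCyclicSucc σ := by
  induction τ using bypass_induction generalizing σ with
  | one => rwa [mul_one] at h
  | step τ a ha ih =>
    have hprod : σ * swap a (τ a) * bypass τ a = σ * τ := by
      rw [mul_assoc, swap_mul_bypass]
    have hbypass := absLength_bypass_add_one ha
    have hswap := absLength_swap ha.symm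
    have hadd : absLength (σ * swap a (τ a)) = absLength σ + absLength (swap a (τ a)) :=
      absLength_eq_add_of_mul_mul (ρ := bypass τ a) (by rw [hprod]; omega)
    have hsucc : MapsToCyclicSucc (σ * swap a (τ a)) :=
      ih (by rwa [hprod]) (by rw [hprod]; omega)
    have hcycle : (σ * swap a (τ a)).SameCycle a (τ a) := by
      simpa only [swap_apply_left] using sameCycle_mul_apply_right hadd a
    simpa only [mul_swap_mul_self] using hsucc.mul_swap ha.symm hcycle

theorem MapsToCyclicSucc.of_mul_right {τ : Perm α} (h : MapsToCyclicSucc (σ * τ))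
    (hlen : absLength (σ * τ) = absLength σ + absLength τ) : MapsToCyclicSucc τ := by
  have hprod : τ * (τ⁻¹ * σ * τ) = σ * τ := by group
  refine of_mul_left (hprod ▸ h) (le_antisymm (absLength_mul_le _ _) ?_)
  rw [hprod, hlen, add_comm (absLength τ)]
  exact Nat.add_le_add_right (absLength_conj_le σ τ) _

end CyclicSuccessor

theorem mapsToCyclicSucc_finRotate (N : ℕ) : MapsToCyclicSucc (finRotate N) := by
  intro i j _
  cases N with
  | zero => exact i.elim0
  | succ n =>
    have hi : (finRotate (n + 1) i).val = if i = Fin.last n then 0 else i.val + 1 :=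
      coe_finRotate i
    simp only [mem_cyclicIoc, Fin.lt_def, Fin.le_def, Fin.ext_iff, Fin.val_last]
      at hi ⊢
    split_ifs at hi <;> omega

section OddAscents

variable {N : ℕ}

/-- `σ` changes the parity of an element exactly when it increases that element. -/
def HasOddAscents (σ : Perm (Fin N)) : Prop := ∀ i, Odd ((σ i : ℕ) + i) ↔ i < σ i

theorem HasOddAscents.neg_one_pow_mul_apply {σ : Perm (Fin N)} (hσ : HasOddAscents σ)
    {f : Fin N → ℚ} (hf : ∀ i, f (σ i) = -f i) (i : Fin N) :
    (-1) ^ (σ i : ℕ) * f (σ i) =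
      if i < σ i then (-1) ^ (i : ℕ) * f i else -((-1) ^ (i : ℕ) * f i) := by
  simp only [← hσ i, hf]
  rcases Nat.even_or_odd (σ i) with hσi | hσi <;> rcases Nat.even_or_odd i with hi | hi <;>
    simp [hσi, hi, hσi.neg_one_pow, hi.neg_one_pow, Nat.odd_add, Nat.not_odd_iff_even.mpr]

-- The function `j ↦ (-1) ^ j * f j` is constant along a cycle except at its only non-ascent, where
-- the maximum is sent to the minimum and the sign changes.
theorem MapsToCyclicSucc.hasOddCycles {σ : Perm (Fin N)} (hσ : MapsToCyclicSucc σ)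
    (hasc : HasOddAscents σ) : HasOddCycles σ := by
  intro f hf
  let g : Fin N → ℚ := fun j => (-1) ^ (j : ℕ) * f j
  have hstep (j : Fin N) : g (σ j) = if j < σ j then g j else -g j :=
    hasc.neg_one_pow_mul_apply hf j
  funext i
  obtain ⟨m, him, hmin⟩ := Set.exists_min_image {j | σ.SameCycle i j} id (Set.toFinite _)
    ⟨i, .refl σ i⟩
  have hm (j) (hj : σ.SameCycle m j) : m ≤ j := hmin j (SameCycle.trans him hj)
  have hconst {j} (hj : σ.SameCycle m j) : g j = g m := by
    refine (prop_of_sameCycle (p := fun k => σ.SameCycle m k ∧ g k = g m) ?_ hj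
      ⟨.refl σ m, rfl⟩).2
    rintro k ⟨hmk, hk⟩
    refine ⟨sameCycle_apply_right.mpr hmk, ?_⟩
    rcases lt_or_ge k (σ k) with hlt | hge
    · rw [hstep, if_pos hlt, hk]
    · rw [hσ.apply_eq_of_apply_le hm hmk hge]
  have hsign : g m = -g m := by
    obtain ⟨p, hp⟩ := σ.surjective m
    have hmp : σ.SameCycle m p := hp ▸ sameCycle_apply_left.mpr (.refl σ p)
    have hnot : ¬ p < σ p := (hp.trans_le (hm p hmp)).not_gt
    calc g m = g (σ p) := by rw [hp]
      _ = -g m := by rw [hstep, if_neg hnot, hconst hmp]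
  have hzero : g i = 0 := (hconst (SameCycle.symm him)).trans (self_eq_neg.mp hsign)
  simpa [g] using hzero

theorem mem_orbitF {σ : Perm (Fin N)} {i j : Fin N} : j ∈ orbitF σ i ↔ σ.SameCycle i j := by
  simp [orbitF]

theorem ODfinset.odd_orderEmbOfFin_succ_sub {S : Finset (Fin N)} (hS : ODfinset S) {k : ℕ}
    (hk : k + 1 < S.card) :
    Odd ((S.orderEmbOfFin rfl ⟨k + 1, hk⟩ : ℕ) -
      S.orderEmbOfFin rfl ⟨k, Nat.lt_of_succ_lt hk⟩) := by
  have hchain : (S.sort.map Fin.val).IsChain fun a b => Odd (b - a) := by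
    -- The coercion of the sorted list to `List ℕ` in `ODfinset` is a monadic bind.
    rw [List.map_eq_flatMap]
    exact hS.2
  have hodd := List.isChain_iff_getElem.mp hchain k (by simpa using hk)
  simp only [List.getElem_map] at hodd
  exact hodd

theorem ODfinset.odd_orderEmbOfFin_add_iff {S : Finset (Fin N)} (hS : ODfinset S) {j k : ℕ}
    (hjk : j ≤ k) (hk : k < S.card) :
    Odd ((S.orderEmbOfFin rfl ⟨k, hk⟩ : ℕ) + S.orderEmbOfFin rfl ⟨j, hjk.trans_lt hk⟩) ↔
      Odd (k + j) := by
  induction k, hjk using Nat.le_induction with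
  | base => grind
  | succ k hjk ih =>
    have := hS.odd_orderEmbOfFin_succ_sub hk
    have := ih (by omega)
    simp only [Nat.odd_iff] at *
    omega

theorem exists_orderEmbOfFin_eq {S : Finset (Fin N)} {u : Fin N} (hu : u ∈ S) :
    ∃ j, S.orderEmbOfFin rfl j = u := by
  rwa [← Set.mem_range, Finset.range_orderEmbOfFin, Finset.mem_coe]

theorem ODfinset.odd_add_of_forall_le_or_le {S : Finset (Fin N)} (hS : ODfinset S) {u v : Fin N}
    (hu : u ∈ S) (hv : v ∈ S) (huv : u < v) (hgap : ∀ w ∈ S, w ≤ u ∨ v ≤ w) :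
    Odd ((v : ℕ) + u) := by
  obtain ⟨j, rfl⟩ := exists_orderEmbOfFin_eq hu
  obtain ⟨k, rfl⟩ := exists_orderEmbOfFin_eq hv
  have hjk : (j : ℕ) < k := (S.orderEmbOfFin rfl).lt_iff_lt.mp huv
  have hsucc : (k : ℕ) = j + 1 := by
    have := hgap _ (S.orderEmbOfFin_mem rfl ⟨j + 1, by omega⟩)
    simp only [OrderEmbedding.le_iff_le, Fin.le_def] at this
    omega
  exact (hS.odd_orderEmbOfFin_add_iff hjk.le k.isLt).mpr (by rw [hsucc]; grind)

theorem ODfinset.even_add_of_forall_le {S : Finset (Fin N)} (hS : ODfinset S) {u v : Fin N}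
    (hu : u ∈ S) (hv : v ∈ S) (hmin : ∀ w ∈ S, u ≤ w) (hmax : ∀ w ∈ S, w ≤ v) :
    Even ((v : ℕ) + u) := by
  obtain ⟨j, rfl⟩ := exists_orderEmbOfFin_eq hu
  obtain ⟨k, rfl⟩ := exists_orderEmbOfFin_eq hv
  have hpos : 0 < S.card := hS.1.pos
  have hj : (j : ℕ) = 0 := by
    have := hmin _ (S.orderEmbOfFin_mem rfl ⟨0, hpos⟩)
    simp only [OrderEmbedding.le_iff_le, Fin.le_def] at this
    omega
  have hk : (k : ℕ) = S.card - 1 := by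
    have := hmax _ (S.orderEmbOfFin_mem rfl ⟨S.card - 1, by omega⟩)
    simp only [OrderEmbedding.le_iff_le, Fin.le_def] at this
    omega
  rw [← Nat.not_odd_iff_even, hS.odd_orderEmbOfFin_add_iff (by omega : (j : ℕ) ≤ k) k.isLt, hj, hk]
  have := hS.1
  grind

theorem MapsToCyclicSucc.hasOddAscents {σ : Perm (Fin N)} (hσ : MapsToCyclicSucc σ)
    (hod : satisfiesOD σ) : HasOddAscents σ := by
  intro i
  have hi : i ∈ orbitF σ i := mem_orbitF.mpr (.refl σ i)
  have hσi : σ i ∈ orbitF σ i := mem_orbitF.mpr (sameCycle_apply_right.mpr (.refl σ i))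
  have hmem {j} (hj : j ∈ orbitF σ i) : σ i ∈ cyclicIoc i j := hσ i j (mem_orbitF.mp hj)
  rcases lt_or_ge i (σ i) with hlt | hge
  · refine iff_of_true ((hod i).odd_add_of_forall_le_or_le hi hσi hlt fun j hj => ?_) hlt
    grind [mem_cyclicIoc]
  · refine iff_of_false (Nat.not_odd_iff_even.mpr ?_) hge.not_gt
    rw [add_comm]
    refine (hod i).even_add_of_forall_le hσi hi (fun j hj => ?_) fun j hj => ?_ <;>
      grind [mem_cyclicIoc]

theorem HasOddAscents.of_mul_right {σ τ : Perm (Fin N)} (hσ : HasOddAscents σ)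
    (hστ : HasOddAscents (σ * τ)) (hsucc : MapsToCyclicSucc (σ * τ))
    (hlen : absLength (σ * τ) = absLength σ + absLength τ) : HasOddAscents τ := by
  intro i
  have hmem : σ (τ i) ∈ cyclicIoc i (τ i) := hsucc i (τ i) (sameCycle_mul_apply_right hlen i)
  have hσ := hσ (τ i)
  have hστ := hστ i
  simp only [mul_apply, mem_cyclicIoc, Fin.lt_def, Fin.le_def, Nat.odd_iff] at *
  omega

end OddAscents

section ONC

variable {N : ℕ} {x y : Perm (Fin N)}

theorem memONC.mapsToCyclicSucc (hx : memONC x) : MapsToCyclicSucc x := by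
  have hlen := leT_isSwap_iff.mp hx.1
  refine MapsToCyclicSucc.of_mul_left (τ := x⁻¹ * finRotate N) ?_ ?_ <;> rw [mul_inv_cancel_left]
  exacts [mapsToCyclicSucc_finRotate N, hlen]

theorem memONC.hasOddAscents (hx : memONC x) : HasOddAscents x :=
  hx.mapsToCyclicSucc.hasOddAscents hx.2

theorem memONC.hasOddCycles (hx : memONC x) : HasOddCycles x :=
  hx.mapsToCyclicSucc.hasOddCycles hx.hasOddAscents

theorem memONC.hasOddCycles_inv_mul (hx : memONC x) (hy : memONC y)
    (hxy : leT (transpositions N) x y) : HasOddCycles (x⁻¹ * y) := by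
  obtain ⟨z, rfl⟩ : ∃ z, y = x * z := ⟨x⁻¹ * y, (mul_inv_cancel_left x y).symm⟩
  have hlen := leT_isSwap_iff.mp hxy
  rw [inv_mul_cancel_left] at hlen ⊢
  have hsucc : MapsToCyclicSucc z := hy.mapsToCyclicSucc.of_mul_right hlen
  have hasc : HasOddAscents z :=
    hx.hasOddAscents.of_mul_right hy.hasOddAscents hy.mapsToCyclicSucc hlen
  exact hsucc.hasOddCycles hasc

end ONC

theorem stmt11 (N : ℕ) (hN : 3 ≤ N) (x y : Perm (Fin N))
    (hx : memONC x) (hy : memONC y) :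
    leT (threeCycles N) x y ↔ leT (transpositions N) x y :=
  ⟨hx.hasOddCycles.leT_isSwap_of_leT_isThreeCycle hy.hasOddCycles,
    fun hxy => hx.hasOddCycles.leT_isThreeCycle_of_leT_isSwap hy.hasOddCycles
      (hx.hasOddCycles_inv_mul hy hxy) hxy⟩
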